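/- Let 0 < s ≤ t, let (x, y) be an admissible reverse transition (x and y differ in exactly one coordinate j with x j = m and y j ≠ m), and suppose q_s x > 0 (so q_u x > 0 for all u > 0). Then the change of the score over [s, t] is controlled by | q_t y / q_t x − q_s y / q_s x | ≤ (t − s) · sup_{u ∈ [s, t]} [ (q_u y / q_u x) · ( (m̄(x) + m̄(y))/u + (2d − m̄(x) − m̄(y)) ) ]. -/

import Mathlib

open Finset

/-- Per-token absorbing transition kernel. -/
noncomputable def absK (S : ℕ) (m : Fin S) (t : ℝ) (a b : Fin S) : ℝ :=
  if a = b then (if a = m then 1 else Real.exp (-t))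
  else (if b = m then 1 - Real.exp (-t) else 0)

/-- Forward marginal at time `t` of the absorbing diffusion started at `q0`. -/
noncomputable def fwd (S d : ℕ) (m : Fin S) (q0 : (Fin d → Fin S) → ℝ) (t : ℝ)
    (x : Fin d → Fin S) : ℝ :=
  ∑ x0 : Fin d → Fin S, q0 x0 * ∏ i : Fin d, absK S m t (x0 i) (x i)

/-- Number of masked coordinates. -/
def nmask (S d : ℕ) (m : Fin S) (x : Fin d → Fin S) : ℕ :=
  (Finset.univ.filter (fun i => x i = m)).card

noncomputable def absKd (S : ℕ) (m : Fin S) (t : ℝ) (a b : Fin S) : ℝ :=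
  if a = b then (if a = m then 0 else -Real.exp (-t))
  else (if b = m then Real.exp (-t) else 0)

theorem absK_hasDeriv (S : ℕ) (m : Fin S) (t : ℝ) (a b : Fin S) :
    HasDerivAt (fun u => absK S m u a b) (absKd S m t a b) t := by
  have h : HasDerivAt (fun u : ℝ => Real.exp (-u)) (-Real.exp (-t)) t := by
    simpa using (hasDerivAt_neg t).exp
  unfold absK absKd
  split_ifs
  · exact hasDerivAt_const _ _
  · exact h
  · simpa using h.const_sub 1
  · exact hasDerivAt_const _ _

theorem absK_nonneg (S : ℕ) (m : Fin S) (t : ℝ) (ht : 0 < t) (a b : Fin S) :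
    0 ≤ absK S m t a b := by
  have h : Real.exp (-t) < 1 := by simpa using ht
  have := Real.exp_pos (-t)
  unfold absK
  split_ifs <;> linarith

theorem absK_pos (S : ℕ) (m : Fin S) (s t : ℝ) (ht : 0 < t) (a b : Fin S)
    (h0 : absK S m s a b ≠ 0) : 0 < absK S m t a b := by
  have h : Real.exp (-t) < 1 := by simpa using ht
  have := Real.exp_pos (-t)
  unfold absK at *
  split_ifs at * <;> first | linarith | exact absurd rfl h0

theorem absKd_bound (S : ℕ) (m : Fin S) (t : ℝ) (ht : 0 < t) (a b : Fin S) :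
    |absKd S m t a b| ≤ (if b = m then 1 / t else 1) * absK S m t a b := by
  have h : Real.exp (-t) < 1 := by simpa using ht
  have hp := Real.exp_pos (-t)
  have key : Real.exp (-t) ≤ 1 / t * (1 - Real.exp (-t)) := by
    rw [div_mul_eq_mul_div, one_mul, le_div_iff₀ ht]
    have h1 := Real.add_one_le_exp t
    have h2 : Real.exp (-t) * Real.exp t = 1 := by rw [← Real.exp_add]; simp
    nlinarith
  by_cases hab : a = b
  · subst hab
    by_cases ham : a = m
    · simp [absK, absKd, ham, ht.le]
    · simp [absK, absKd, ham]
  · by_cases hbm : b = m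
    · simp only [absK, absKd, hab, hbm, if_true]
      subst hbm
      simpa [hab, abs_of_pos hp] using key
    · simp [absK, absKd, hab, hbm]

theorem sum_rate (S d : ℕ) (m : Fin S) (t : ℝ) (x : Fin d → Fin S) :
    ∑ i, (if x i = m then 1 / t else 1) = (nmask S d m x : ℝ) / t + (d - nmask S d m x) := by
  have : ∀ i, (if x i = m then 1 / t else 1) = (if x i = m then (1:ℝ) else 0) * (1 / t - 1) + 1 := by
    intro i; split_ifs <;> ring
  simp_rw [this]
  rw [Finset.sum_add_distrib, ← Finset.sum_mul, Finset.sum_boole]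
  simp [nmask]
  ring

theorem fwd_hasDeriv (S d : ℕ) (m : Fin S) (q0 : (Fin d → Fin S) → ℝ) (hq0 : ∀ x, 0 ≤ q0 x)
    (t : ℝ) (ht : 0 < t) (x : Fin d → Fin S) :
    ∃ D, HasDerivAt (fun u => fwd S d m q0 u x) D t ∧
      |D| ≤ ((nmask S d m x : ℝ) / t + (d - nmask S d m x)) * fwd S d m q0 t x := by
  refine ⟨∑ x0 : Fin d → Fin S, q0 x0 * ∑ i, (∏ k ∈ univ.erase i, absK S m t (x0 k) (x k)) •
    absKd S m t (x0 i) (x i), ?_, ?_⟩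
  · unfold fwd
    refine HasDerivAt.fun_sum fun x0 _ => HasDerivAt.const_mul _ ?_
    exact HasDerivAt.fun_finset_prod fun i _ => absK_hasDeriv S m t (x0 i) (x i)
  · unfold fwd
    rw [Finset.mul_sum]
    refine (Finset.abs_sum_le_sum_abs _ _).trans (Finset.sum_le_sum fun x0 _ => ?_)
    rw [abs_mul, abs_of_nonneg (hq0 x0), mul_left_comm]
    refine mul_le_mul_of_nonneg_left ?_ (hq0 x0)
    rw [← sum_rate, Finset.sum_mul]
    refine (Finset.abs_sum_le_sum_abs _ _).trans (Finset.sum_le_sum fun i _ => ?_)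
    have hn : 0 ≤ ∏ k ∈ univ.erase i, absK S m t (x0 k) (x k) :=
      Finset.prod_nonneg fun k _ => absK_nonneg S m t ht _ _
    rw [smul_eq_mul, abs_mul, abs_of_nonneg hn, ← Finset.mul_prod_erase univ _ (mem_univ i)]
    calc _ ≤ _ := mul_le_mul_of_nonneg_left (absKd_bound S m t ht (x0 i) (x i)) hn
      _ = _ := by ring

theorem fwd_nonneg (S d : ℕ) (m : Fin S) (q0 : (Fin d → Fin S) → ℝ) (hq0 : ∀ x, 0 ≤ q0 x)
    (t : ℝ) (ht : 0 < t) (x : Fin d → Fin S) : 0 ≤ fwd S d m q0 t x :=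
  Finset.sum_nonneg fun x0 _ => mul_nonneg (hq0 x0)
    (Finset.prod_nonneg fun k _ => absK_nonneg S m t ht _ _)

theorem fwd_pos (S d : ℕ) (m : Fin S) (q0 : (Fin d → Fin S) → ℝ) (hq0 : ∀ x, 0 ≤ q0 x)
    (s t : ℝ) (ht : 0 < t) (x : Fin d → Fin S) (h : 0 < fwd S d m q0 s x) :
    0 < fwd S d m q0 t x := by
  obtain ⟨x0, -, h0⟩ := Finset.exists_ne_zero_of_sum_ne_zero (ne_of_gt h)
  have hne := mul_ne_zero_iff.1 h0
  refine Finset.sum_pos' (fun x0 _ => mul_nonneg (hq0 x0)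
    (Finset.prod_nonneg fun k _ => absK_nonneg S m t ht _ _)) ⟨x0, mem_univ _, ?_⟩
  refine mul_pos (lt_of_le_of_ne (hq0 x0) hne.1.symm) (Finset.prod_pos fun i _ => ?_)
  exact absK_pos S m s t ht _ _ (Finset.prod_ne_zero_iff.1 hne.2 i (mem_univ i))

/-- Control on the change of the score of an admissible reverse transition over `[s, t]`. -/
theorem absorbing_score_change_bound (S d : ℕ) (hS : 2 ≤ S) (hd : 1 ≤ d) (m : Fin S)
    (q0 : (Fin d → Fin S) → ℝ) (hq0 : ∀ x, 0 ≤ q0 x)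
    (hq0sum : ∑ x : Fin d → Fin S, q0 x = 1)
    (s t : ℝ) (hs : 0 < s) (hst : s ≤ t) (x y : Fin d → Fin S) (j : Fin d)
    (hxj : x j = m) (hyj : y j ≠ m) (hoff : ∀ i : Fin d, i ≠ j → x i = y i)
    (hqx : 0 < fwd S d m q0 s x) :
    |fwd S d m q0 t y / fwd S d m q0 t x - fwd S d m q0 s y / fwd S d m q0 s x|
      ≤ (t - s) *
          sSup ((fun u : ℝ =>
              (fwd S d m q0 u y / fwd S d m q0 u x) *
                (((nmask S d m x : ℝ) + (nmask S d m y : ℝ)) / u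
                  + (2 * (d : ℝ) - (nmask S d m x : ℝ) - (nmask S d m y : ℝ))))
            '' Set.Icc s t) := by
  have hpos : ∀ u ∈ Set.Icc s t, 0 < u := fun u hu => hs.trans_le hu.1
  have hcont : ∀ z, ContinuousOn (fun u => fwd S d m q0 u z) (Set.Icc s t) := by
    intro z u hu
    obtain ⟨D, hD, -⟩ := fwd_hasDeriv S d m q0 hq0 u (hpos u hu) z
    exact hD.continuousAt.continuousWithinAt
  have hx : ∀ u ∈ Set.Icc s t, 0 < fwd S d m q0 u x :=
    fun u hu => fwd_pos S d m q0 hq0 s u (hpos u hu) x hqx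
  set F : ℝ → ℝ := fun u : ℝ =>
              (fwd S d m q0 u y / fwd S d m q0 u x) *
                (((nmask S d m x : ℝ) + (nmask S d m y : ℝ)) / u
                  + (2 * (d : ℝ) - (nmask S d m x : ℝ) - (nmask S d m y : ℝ))) with hF
  have hFc : ContinuousOn F (Set.Icc s t) := by
    refine ((hcont y).div (hcont x) fun u hu => (hx u hu).ne').mul ?_
    exact (continuousOn_const.div continuousOn_id fun u hu => (hpos u hu).ne').add
      continuousOn_const
  have hbdd : BddAbove (F '' Set.Icc s t) := (isCompact_Icc.image_of_continuousOn hFc).bddAbove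
  have hder : ∀ u ∈ Set.Icc s t, ∃ D,
      HasDerivAt (fun u => fwd S d m q0 u y / fwd S d m q0 u x) D u ∧ |D| ≤ F u := by
    intro u hu
    obtain ⟨A, hA, hA'⟩ := fwd_hasDeriv S d m q0 hq0 u (hpos u hu) y
    obtain ⟨B, hB, hB'⟩ := fwd_hasDeriv S d m q0 hq0 u (hpos u hu) x
    have hxu := hx u hu
    have hyu := fwd_nonneg S d m q0 hq0 u (hpos u hu) y
    refine ⟨_, hA.fun_div hB hxu.ne', ?_⟩
    simp only [hF]
    rw [abs_div, abs_of_pos (pow_pos hxu 2), div_le_iff₀ (pow_pos hxu 2)]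
    have e : ∀ c : ℝ, fwd S d m q0 u y / fwd S d m q0 u x * c * fwd S d m q0 u x ^ 2
        = fwd S d m q0 u y * fwd S d m q0 u x * c := by
      intro c; field_simp
    rw [e]
    refine (abs_sub _ _).trans ?_
    rw [abs_mul, abs_mul, abs_of_pos hxu, abs_of_nonneg hyu]
    have h1 := mul_le_mul_of_nonneg_right hA' hxu.le
    have h2 := mul_le_mul_of_nonneg_left hB' hyu
    refine (add_le_add h1 h2).trans (le_of_eq ?_)
    ring
  choose! D hD hDF using hder
  have := Convex.norm_image_sub_le_of_norm_hasDerivWithin_le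
    (f := fun u => fwd S d m q0 u y / fwd S d m q0 u x) (f' := D) (s := Set.Icc s t)
    (C := sSup (F '' Set.Icc s t)) (x := s) (y := t)
    (fun u hu => (hD u hu).hasDerivWithinAt)
    (fun u hu => (hDF u hu).trans (le_csSup hbdd ⟨u, hu, rfl⟩))
    (convex_Icc s t) ⟨le_rfl, hst⟩ ⟨hst, le_rfl⟩
  rw [Real.norm_eq_abs, Real.norm_eq_abs, abs_of_nonneg (sub_nonneg.2 hst), mul_comm] at this
  exact this
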